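/- arXiv:1805.01559 — 6 statements merged into one kernel-verified Lean document; each statement's English description precedes it below -/
import Mathlib

section
/- Let π^{SINR} be a maxSINR association, let Λ_j = Σ_i λ_i π^{SINR}_{ij}, and set x^{SINR}_{ij} = λ_i π^{SINR}_{ij}. Then x^{SINR} minimizes the cost Σ_{ij} x_{ij}/(μ R_{ij}) over the transportation polytope U(λ, Λ): for every x ∈ U(λ, Λ), Σ_{ij} x^{SINR}_{ij}/(μ R_{ij}) ≤ Σ_{ij} x_{ij}/(μ R_{ij}). -/
open Finset

/-- An association: nonnegative entries, each device's fractions sum to 1. -/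
def IsAssociation {m n : ℕ} (π : Matrix (Fin m) (Fin n) ℝ) : Prop :=
  (∀ i j, 0 ≤ π i j) ∧ (∀ i, ∑ j, π i j = 1)

/-- A maxSINR association: `π i j = 0` whenever `R i j < max_k R i k`,
i.e. whenever some station `k` offers device `i` a strictly larger rate. -/
def IsMaxSINR {m n : ℕ} (R π : Matrix (Fin m) (Fin n) ℝ) : Prop :=
  IsAssociation π ∧ ∀ i j, (∃ k, R i j < R i k) → π i j = 0

/-- Membership in the transportation polytope `U(p, q)`. -/
def InPolytope {m n : ℕ} (p : Fin m → ℝ) (q : Fin n → ℝ)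
    (x : Matrix (Fin m) (Fin n) ℝ) : Prop :=
  (∀ i j, 0 ≤ x i j) ∧ (∀ i, ∑ j, x i j = p i) ∧ (∀ j, ∑ i, x i j = q j)

theorem sum_mul_le_sum_mul_of_support_argmin {κ 𝕜 : Type*} [Semiring 𝕜] [PartialOrder 𝕜]
    [IsOrderedRing 𝕜] {s : Finset κ} {c x y : κ → 𝕜}
    (hmin : ∀ j ∈ s, x j ≠ 0 → ∀ k ∈ s, c j ≤ c k) (hy : ∀ j ∈ s, 0 ≤ y j)
    (hsum : ∑ j ∈ s, x j = ∑ j ∈ s, y j) :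
    ∑ j ∈ s, x j * c j ≤ ∑ j ∈ s, y j * c j := by
  by_cases hx : ∃ j ∈ s, x j ≠ 0
  · obtain ⟨l, hl, hxl⟩ := hx
    have cost_eq : ∀ j ∈ s, x j * c j = x j * c l := fun j hj => by
      by_cases hxj : x j = 0
      · simp only [hxj, zero_mul]
      · rw [(hmin j hj hxj l hl).antisymm (hmin l hl hxl j hj)]
    calc ∑ j ∈ s, x j * c j = (∑ j ∈ s, x j) * c l := by rw [sum_congr rfl cost_eq, sum_mul]
      _ = ∑ j ∈ s, y j * c l := by rw [hsum, sum_mul]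
      _ ≤ ∑ j ∈ s, y j * c j :=
        sum_le_sum fun j hj => mul_le_mul_of_nonneg_left (hmin l hl hxl j hj) (hy j hj)
  · push Not at hx
    have y_eq_zero : ∀ j ∈ s, y j = 0 :=
      (sum_eq_zero_iff_of_nonneg hy).mp (hsum.symm.trans (sum_eq_zero hx))
    refine (sum_congr rfl fun j hj => ?_).le
    rw [hx j hj, y_eq_zero j hj]

theorem IsAssociation.sum_mul_left {m n : ℕ} {π : Matrix (Fin m) (Fin n) ℝ}
    (hπ : IsAssociation π) (a : ℝ) (i : Fin m) : ∑ j, a * π i j = a := by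
  rw [← mul_sum, hπ.2 i, mul_one]

theorem IsMaxSINR.rate_le_of_ne_zero {m n : ℕ} {R π : Matrix (Fin m) (Fin n) ℝ}
    (hπ : IsMaxSINR R π) {i : Fin m} {j : Fin n} (hij : π i j ≠ 0) (k : Fin n) :
    R i k ≤ R i j :=
  not_lt.mp fun hlt => hij (hπ.2 i j ⟨k, hlt⟩)

/-- With only the row sums fixed, the minimization decouples into one problem per device. -/
theorem stmt_3_general {ι κ 𝕜 : Type*} [Fintype ι] [Fintype κ] [Field 𝕜] [LinearOrder 𝕜]
    [IsStrictOrderedRing 𝕜] {μ : 𝕜} (hμ : 0 < μ) {R xS x : Matrix ι κ 𝕜}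
    (hR : ∀ i j, 0 < R i j) (hxS : ∀ i j, xS i j ≠ 0 → ∀ k, R i k ≤ R i j)
    (hx : ∀ i j, 0 ≤ x i j) (hrow : ∀ i, ∑ j, xS i j = ∑ j, x i j) :
    ∑ i, ∑ j, xS i j / (μ * R i j) ≤ ∑ i, ∑ j, x i j / (μ * R i j) := by
  simp only [div_eq_mul_inv]
  have time_le : ∀ i j, xS i j ≠ 0 → ∀ k, (μ * R i j)⁻¹ ≤ (μ * R i k)⁻¹ := fun i j hij k =>
    inv_anti₀ (mul_pos hμ (hR i k)) (mul_le_mul_of_nonneg_left (hxS i j hij k) hμ.le)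
  exact sum_le_sum fun i _ => sum_mul_le_sum_mul_of_support_argmin
    (fun j _ hij k _ => time_le i j hij k) (fun j _ => hx i j) (hrow i)

/-- `x^{SINR}_{ij} = λ_i π^{SINR}_{ij}` minimizes the cost
`∑_{ij} x_{ij}/(μ R_{ij})` over the transportation polytope `U(λ, Λ)`. -/
theorem stmt_3 (m n : ℕ) (hm : 0 < m) (hn : 0 < n)
    (lam : Fin m → ℝ) (hlam : ∀ i, 0 < lam i)
    (μ : ℝ) (hμ : 0 < μ)
    (R : Matrix (Fin m) (Fin n) ℝ) (hR : ∀ i j, 0 < R i j)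
    (πS : Matrix (Fin m) (Fin n) ℝ) (hS : IsMaxSINR R πS)
    (Λ : Fin n → ℝ) (hΛ : ∀ j, Λ j = ∑ i, lam i * πS i j)
    (xS : Matrix (Fin m) (Fin n) ℝ) (hxS : ∀ i j, xS i j = lam i * πS i j)
    (x : Matrix (Fin m) (Fin n) ℝ) (hx : InPolytope lam Λ x) :
    ∑ i, ∑ j, xS i j / (μ * R i j) ≤ ∑ i, ∑ j, x i j / (μ * R i j) := by
  refine stmt_3_general hμ hR (fun i j hij => hS.rate_le_of_ne_zero ?_) hx.1 fun i => ?_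
  · exact right_ne_zero_of_mul (hxS i j ▸ hij)
  · simp only [hxS, hS.1.sum_mul_left, hx.2.1]
end

section
/- Let π^{SINR} be a maxSINR association and let Λ_j = Σ_i λ_i π^{SINR}_{ij}. Then the minimum of Σ_{ij} x_{ij}/(μ R_{ij}) over the transportation polytope U(λ, Λ) equals the minimum of the total load Σ_j ρ_j(π) over all associations π. -/
open Finset

/-- Load of RRH `j` under association `π`. -/
noncomputable def load {m n : ℕ} (lam : Fin m → ℝ) (μ : ℝ)
    (R : Matrix (Fin m) (Fin n) ℝ) (π : Matrix (Fin m) (Fin n) ℝ) (j : Fin n) : ℝ :=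
  ∑ i, lam i / (μ * R i j) * π i j

/-!
Dropping the column sums from the transportation polytope leaves a problem that decouples over the
rows, each device sending all its traffic wherever its service time is smallest. The traffic matrix
of a maxSINR association does exactly this, so it solves the relaxed problem. Both minimizations of
the theorem are restrictions of the relaxed one, and this minimizer is feasible for each of them.
-/

theorem sum_diagonal_mul_apply {ι κ α : Type*} [Fintype ι] [DecidableEq ι] [Fintype κ]
    [NonUnitalNonAssocSemiring α] (d : ι → α) (x : Matrix ι κ α) (i : ι) :
    ∑ j, (Matrix.diagonal d * x) i j = d i * ∑ j, x i j := by
  simp only [Matrix.diagonal_mul, mul_sum]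

section OrderedSemiring

variable {ι κ 𝕜 : Type*} [Fintype κ] [Semiring 𝕜] [PartialOrder 𝕜]

/-- The matrices with nonnegative entries and row sums `p`: the relaxation of the transportation
polytope in which the column sums are free. -/
def rowSumPolytope (p : ι → 𝕜) : Set (Matrix ι κ 𝕜) :=
  {x | (∀ i j, 0 ≤ x i j) ∧ ∀ i, ∑ j, x i j = p i}

theorem diagonal_mul_mem_rowSumPolytope [Fintype ι] [DecidableEq ι] [PosMulMono 𝕜]
    {d p : ι → 𝕜} {x : Matrix ι κ 𝕜} (hd : ∀ i, 0 ≤ d i) (hx : x ∈ rowSumPolytope p) :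
    Matrix.diagonal d * x ∈ rowSumPolytope (d * p) := by
  refine ⟨fun i j ↦ ?_, fun i ↦ ?_⟩
  · rw [Matrix.diagonal_mul]
    exact mul_nonneg (hd i) (hx.1 i j)
  · rw [sum_diagonal_mul_apply, hx.2, Pi.mul_apply]

variable [IsOrderedRing 𝕜]

theorem sum_mul_le_sum_mul_of_support_minimizes {c p q : κ → 𝕜} (hq : ∀ j, 0 ≤ q j)
    (hpq : ∑ j, p j = ∑ j, q j) (hp : ∀ j, p j ≠ 0 → ∀ k, c j ≤ c k) :
    ∑ j, p j * c j ≤ ∑ j, q j * c j := by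
  by_cases hsupp : ∃ k, p k ≠ 0
  · obtain ⟨k, hk⟩ := hsupp
    have hconst (j : κ) : p j * c j = p j * c k := by
      by_cases hj : p j = 0
      · simp only [hj, zero_mul]
      · rw [(hp j hj k).antisymm (hp k hk j)]
    calc ∑ j, p j * c j = (∑ j, p j) * c k := by simp only [hconst, sum_mul]
      _ = ∑ j, q j * c k := by rw [hpq, sum_mul]
      _ ≤ ∑ j, q j * c j := sum_le_sum fun j _ ↦ mul_le_mul_of_nonneg_left (hp k hk j) (hq j)
  · push Not at hsupp
    have hq_zero : ∀ j, q j = 0 := by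
      simpa [hsupp, sum_eq_zero_iff_of_nonneg, hq] using hpq.symm
    simp only [hsupp, hq_zero, le_refl]

variable [Fintype ι]

/-- The cost of the transport plan `x` when moving a unit from `i` to `j` costs `c i j`. -/
def transportCost (c x : Matrix ι κ 𝕜) : 𝕜 :=
  ∑ i, ∑ j, x i j * c i j

theorem isMinOn_transportCost_rowSumPolytope {c x : Matrix ι κ 𝕜} {p : ι → 𝕜}
    (hx : ∀ i, ∑ j, x i j = p i) (hmin : ∀ i j, x i j ≠ 0 → ∀ k, c i j ≤ c i k) :
    IsMinOn (transportCost c) (rowSumPolytope p) x := fun _ hy ↦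
  sum_le_sum fun i _ ↦
    sum_mul_le_sum_mul_of_support_minimizes (hy.1 i) ((hx i).trans (hy.2 i).symm) (hmin i)

end OrderedSemiring

section Network

variable {m n : ℕ} {lam : Fin m → ℝ} {μ : ℝ} {R π : Matrix (Fin m) (Fin n) ℝ}

/-- The mean service time `1 / (μ R i j)` of a job of device `i` at RRH `j`. -/
noncomputable def serviceTime (μ : ℝ) (R : Matrix (Fin m) (Fin n) ℝ) : Matrix (Fin m) (Fin n) ℝ :=
  Matrix.of fun i j ↦ (μ * R i j)⁻¹

theorem sum_div_eq_transportCost (μ : ℝ) (R x : Matrix (Fin m) (Fin n) ℝ) :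
    ∑ i, ∑ j, x i j / (μ * R i j) = transportCost (serviceTime μ R) x := by
  simp only [transportCost, serviceTime, Matrix.of_apply, div_eq_mul_inv]

theorem sum_load_eq_transportCost (lam : Fin m → ℝ) (μ : ℝ) (R π : Matrix (Fin m) (Fin n) ℝ) :
    ∑ j, load lam μ R π j = transportCost (serviceTime μ R) (Matrix.diagonal lam * π) := by
  simp only [load, ← sum_div_eq_transportCost, Matrix.diagonal_mul, div_mul_eq_mul_div]
  exact sum_comm

theorem IsAssociation.diagonal_mul_mem (hπ : IsAssociation π)
    (hlam : ∀ i, 0 ≤ lam i) : Matrix.diagonal lam * π ∈ rowSumPolytope lam := by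
  have hπ_mem : π ∈ rowSumPolytope 1 := hπ
  simpa only [mul_one] using diagonal_mul_mem_rowSumPolytope hlam hπ_mem

theorem IsMaxSINR.serviceTime_le (hπ : IsMaxSINR R π) (hμ : 0 < μ) (hR : ∀ i j, 0 < R i j)
    {i : Fin m} {j : Fin n} (hij : π i j ≠ 0) (k : Fin n) :
    serviceTime μ R i j ≤ serviceTime μ R i k := by
  have hrate : R i k ≤ R i j := not_lt.mp fun hlt ↦ hij (hπ.2 i j ⟨k, hlt⟩)
  exact inv_anti₀ (mul_pos hμ (hR i k)) (mul_le_mul_of_nonneg_left hrate hμ.le)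

theorem IsMaxSINR.isMinOn_transportCost (hπ : IsMaxSINR R π) (hμ : 0 < μ)
    (hR : ∀ i j, 0 < R i j) :
    IsMinOn (transportCost (serviceTime μ R)) (rowSumPolytope lam) (Matrix.diagonal lam * π) := by
  refine isMinOn_transportCost_rowSumPolytope (fun i ↦ ?_) fun i j hij ↦ ?_
  · rw [sum_diagonal_mul_apply, hπ.1.2, mul_one]
  · rw [Matrix.diagonal_mul] at hij
    exact hπ.serviceTime_le hμ hR (right_ne_zero_of_mul hij)

end Network

/-- the minimum of `∑_{ij} x_{ij}/(μ R_{ij})` over `U(λ, Λ)` (with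
`Λ_j = ∑_i λ_i π^{SINR}_{ij}`) equals the minimum total load over all
associations. -/
theorem stmt_5 (m n : ℕ) (hm : 0 < m) (hn : 0 < n)
    (lam : Fin m → ℝ) (hlam : ∀ i, 0 < lam i)
    (μ : ℝ) (hμ : 0 < μ)
    (R : Matrix (Fin m) (Fin n) ℝ) (hR : ∀ i j, 0 < R i j)
    (πS : Matrix (Fin m) (Fin n) ℝ) (hS : IsMaxSINR R πS)
    (Λ : Fin n → ℝ) (hΛ : ∀ j, Λ j = ∑ i, lam i * πS i j) :
    sInf ((fun x : Matrix (Fin m) (Fin n) ℝ => ∑ i, ∑ j, x i j / (μ * R i j)) ''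
        {x | InPolytope lam Λ x}) =
      sInf ((fun π : Matrix (Fin m) (Fin n) ℝ => ∑ j, load lam μ R π j) ''
        {π | IsAssociation π}) := by
  have hmin := hS.isMinOn_transportCost (lam := lam) hμ hR
  have hmaps : Set.MapsTo (fun π : Matrix (Fin m) (Fin n) ℝ ↦ Matrix.diagonal lam * π)
      {π | IsAssociation π} (rowSumPolytope lam) :=
    fun π hπ ↦ hπ.diagonal_mul_mem fun i ↦ (hlam i).le
  have hπS : πS ∈ {π | IsAssociation π} := hS.1
  have hxS : Matrix.diagonal lam * πS ∈ {x | InPolytope lam Λ x} := by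
    refine ⟨(hmaps hπS).1, (hmaps hπS).2, fun j ↦ ?_⟩
    simp only [Matrix.diagonal_mul, hΛ]
  have hsub : {x | InPolytope lam Λ x} ⊆ rowSumPolytope lam := fun x hx ↦ ⟨hx.1, hx.2.1⟩
  simp only [sum_div_eq_transportCost, sum_load_eq_transportCost, sInf_image']
  exact ((hmin.on_subset hsub).iInf_eq hxS).trans
    ((hmin.comp_mapsTo hmaps rfl).iInf_eq hπS).symm
end

section
/- Let C ∈ ℝ^{m×n}, ε > 0, and let p ∈ ℝ^m, q ∈ ℝ^n have strictly positive entries with Σ_i p_i = Σ_j q_j. If π* minimizes the regularized OT objective F_ε over the transportation polytope U(p,q), then π*_{ij} > 0 for all i, j. -/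
open Finset

/-- The entropically regularized OT objective `F_ε`; with `Real.log 0 = 0`,
the convention `0·(log 0 − 1) = 0` holds automatically. -/
noncomputable def regObj {m n : ℕ} (C : Matrix (Fin m) (Fin n) ℝ) (ε : ℝ)
    (x : Matrix (Fin m) (Fin n) ℝ) : ℝ :=
  ∑ i, ∑ j, C i j * x i j + ε * ∑ i, ∑ j, x i j * (Real.log (x i j) - 1)

/-!
The entropy has infinite slope at the boundary of the orthant: if `x i = 0 < y i`, then moving
from `x` to `(1 - t) • x + t • y` gains, on top of the concave interpolation of the entropies, the
term `y i * negMulLog t = -t * y i * log t`, which for small `t` exceeds any cost of order `t`.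
Hence a minimizer of a convex function minus a positive multiple of the entropy over a convex set
is positive in every coordinate in which some point of the set is. In a transportation polytope,
the normalized product of the marginals is such a point.
-/

section Entropy

open Real Filter Topology

variable {α : Type*} [Fintype α] {x y : α → ℝ} {i : α} {t : ℝ}

/-- The Shannon entropy `-∑ k, x k * log (x k)` of a nonnegative vector, in nats. The total mass is
not required to be one. -/
noncomputable def shannonEntropy (x : α → ℝ) : ℝ :=
  ∑ k, negMulLog (x k)

lemma shannonEntropy_mix_ge_of_eq_zero (hx : 0 ≤ x) (hy : 0 ≤ y) (ht₀ : 0 ≤ t) (ht₁ : t ≤ 1)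
    (hxi : x i = 0) :
    (1 - t) * shannonEntropy x + t * shannonEntropy y + y i * negMulLog t ≤
      shannonEntropy ((1 - t) • x + t • y) := by
  classical
  have concave (k : α) : (1 - t) * negMulLog (x k) + t * negMulLog (y k) ≤
      negMulLog ((1 - t) * x k + t * y k) :=
    concaveOn_negMulLog.2 (hx k) (hy k) (sub_nonneg.2 ht₁) ht₀ (sub_add_cancel 1 t)
  have gain : negMulLog ((1 - t) * x i + t * y i) =
      (1 - t) * negMulLog (x i) + t * negMulLog (y i) + y i * negMulLog t := by
    rw [hxi, mul_zero, zero_add, negMulLog_mul, negMulLog_zero]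
    ring
  have rest := sum_le_sum fun k (_ : k ∈ ({i}ᶜ : Finset α)) ↦ concave k
  rw [sum_add_distrib, ← mul_sum, ← mul_sum] at rest
  simp only [shannonEntropy, Fintype.sum_eq_add_sum_compl i, Pi.add_apply, Pi.smul_apply,
    smul_eq_mul, gain]
  linarith

theorem pos_of_isMinOn_sub_shannonEntropy {K : Set (α → ℝ)} {g : (α → ℝ) → ℝ} {ε : ℝ}
    (hε : 0 < ε) (hK : ∀ z ∈ K, 0 ≤ z) (hg : ConvexOn ℝ K g)
    (hmin : IsMinOn (fun z ↦ g z - ε * shannonEntropy z) K x)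
    (hx : x ∈ K) (hy : y ∈ K) (hyi : 0 < y i) : 0 < x i := by
  refine (hK x hx i).lt_of_ne' fun hxi ↦ ?_
  set F : (α → ℝ) → ℝ := fun z ↦ g z - ε * shannonEntropy z with hF
  have slope {t : ℝ} (ht₀ : 0 < t) (ht₁ : t < 1) : F x - F y ≤ ε * y i * log t := by
    have hsum : 1 - t + t = 1 := sub_add_cancel 1 t
    have min_le : F x ≤ F ((1 - t) • x + t • y) :=
      hmin (hg.1 hx hy (sub_nonneg.2 ht₁.le) ht₀.le hsum)
    have cost_le : g ((1 - t) • x + t • y) ≤ (1 - t) * g x + t * g y :=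
      hg.2 hx hy (sub_nonneg.2 ht₁.le) ht₀.le hsum
    have entropy_ge := mul_le_mul_of_nonneg_left
      (shannonEntropy_mix_ge_of_eq_zero (hK x hx) (hK y hy) ht₀.le ht₁.le hxi) hε.le
    refine le_of_mul_le_mul_left ?_ ht₀
    simp only [hF, negMulLog] at min_le entropy_ge ⊢
    linarith
  have log_small : ∀ᶠ t in 𝓝[>] (0 : ℝ), log t < (F x - F y) / (ε * y i) :=
    tendsto_log_nhdsGT_zero.eventually_lt_atBot _
  obtain ⟨t, hlog, ht₀, ht₁⟩ :=
    (log_small.and (Ioo_mem_nhdsGT (zero_lt_one (α := ℝ)))).exists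
  rw [lt_div_iff₀' (mul_pos hε hyi)] at hlog
  exact hlog.not_ge (slope ht₀ ht₁)

end Entropy

section TransportationPolytope

variable {ι κ : Type*} [Fintype ι] [Fintype κ] {p : ι → ℝ} {q : κ → ℝ}

/-- The transportation polytope `U(p, q)` for arbitrary finite index types. Plans are functions on
the product `ι × κ` rather than matrices, so that they are vectors indexed by a single type. -/
def transportationPolytope (p : ι → ℝ) (q : κ → ℝ) : Set (ι × κ → ℝ) :=
  {x | (∀ i j, 0 ≤ x (i, j)) ∧ (∀ i, ∑ j, x (i, j) = p i) ∧ ∀ j, ∑ i, x (i, j) = q j}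

/-- The product of the marginals `p` and `q`, divided by their common total mass; for probability
vectors this is the independent coupling. -/
noncomputable def productPlan (p : ι → ℝ) (q : κ → ℝ) : ι × κ → ℝ :=
  fun k ↦ p k.1 * q k.2 / ∑ i, p i

lemma convex_transportationPolytope (p : ι → ℝ) (q : κ → ℝ) :
    Convex ℝ (transportationPolytope p q) := by
  rintro x ⟨hx, hxp, hxq⟩ y ⟨hy, hyp, hyq⟩ a b ha hb hab
  simp only [transportationPolytope, Set.mem_ofPred_eq, Pi.add_apply, Pi.smul_apply, smul_eq_mul,
    sum_add_distrib, ← mul_sum, hxp, hxq, hyp, hyq, ← add_mul, hab, one_mul, implies_true,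
    and_true]
  exact fun i j ↦ add_nonneg (mul_nonneg ha (hx i j)) (mul_nonneg hb (hy i j))

lemma sum_eq_sum_of_mem_transportationPolytope {x : ι × κ → ℝ}
    (hx : x ∈ transportationPolytope p q) : ∑ i, p i = ∑ j, q j := by
  simp only [← hx.2.1, ← hx.2.2]
  exact sum_comm

lemma productPlan_mem_transportationPolytope (hp : 0 ≤ p) (hq : 0 ≤ q)
    (hbal : ∑ i, p i = ∑ j, q j) (hmass : ∑ i, p i ≠ 0) :
    productPlan p q ∈ transportationPolytope p q := by
  refine ⟨fun i j ↦ div_nonneg (mul_nonneg (hp i) (hq j)) (sum_nonneg fun i _ ↦ hp i),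
    fun i ↦ ?_, fun j ↦ ?_⟩
  · simp only [productPlan]
    rw [← sum_div, ← mul_sum, ← hbal, mul_div_cancel_right₀ _ hmass]
  · simp only [productPlan]
    rw [← sum_div, ← sum_mul, mul_div_cancel_left₀ _ hmass]

theorem stmt_10_general {g : (ι × κ → ℝ) → ℝ} {ε : ℝ} (hε : 0 < ε)
    (hg : ConvexOn ℝ (transportationPolytope p q) g) {x : ι × κ → ℝ}
    (hx : x ∈ transportationPolytope p q)
    (hmin : IsMinOn (fun z ↦ g z - ε * shannonEntropy z) (transportationPolytope p q) x)
    {i : ι} {j : κ} (hpi : 0 < p i) (hqj : 0 < q j) : 0 < x (i, j) := by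
  have hp : 0 ≤ p := fun i ↦ hx.2.1 i ▸ sum_nonneg fun j _ ↦ hx.1 i j
  have hq : 0 ≤ q := fun j ↦ hx.2.2 j ▸ sum_nonneg fun i _ ↦ hx.1 i j
  have hmass : 0 < ∑ i, p i := sum_pos' (fun i _ ↦ hp i) ⟨i, mem_univ i, hpi⟩
  have hplan := productPlan_mem_transportationPolytope hp hq
    (sum_eq_sum_of_mem_transportationPolytope hx) hmass.ne'
  exact pos_of_isMinOn_sub_shannonEntropy hε (fun z hz k ↦ hz.1 k.1 k.2) hg hmin hx hplan
    (div_pos (mul_pos hpi hqj) hmass)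

end TransportationPolytope

lemma regObj_eq_dotProduct_sub_shannonEntropy {m n : ℕ} (C : Matrix (Fin m) (Fin n) ℝ) (ε : ℝ)
    (x : Matrix (Fin m) (Fin n) ℝ) :
    regObj C ε x = (fun k ↦ C k.1 k.2 - ε) ⬝ᵥ Function.uncurry x -
      ε * shannonEntropy (Function.uncurry x) := by
  simp only [regObj, dotProduct, shannonEntropy, Fintype.sum_prod_type, Function.uncurry,
    Real.negMulLog, mul_sum, ← sum_add_distrib, ← sum_sub_distrib]
  exact sum_congr rfl fun i _ ↦ sum_congr rfl fun j _ ↦ by ring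

/-- for `ε > 0` and balanced strictly positive marginals, any
minimizer of `F_ε` over `U(p, q)` has strictly positive entries. -/
theorem stmt_10 (m n : ℕ) (C : Matrix (Fin m) (Fin n) ℝ) (ε : ℝ) (hε : 0 < ε)
    (p : Fin m → ℝ) (q : Fin n → ℝ)
    (hp : ∀ i, 0 < p i) (hq : ∀ j, 0 < q j)
    (hbal : ∑ i, p i = ∑ j, q j)
    (xstar : Matrix (Fin m) (Fin n) ℝ)
    (hfeas : InPolytope p q xstar)
    (hopt : ∀ x, InPolytope p q x → regObj C ε xstar ≤ regObj C ε x) :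
    ∀ i j, 0 < xstar i j := by
  simp only [regObj_eq_dotProduct_sub_shannonEntropy] at hopt
  exact fun i j ↦ stmt_10_general hε
    ((dotProductBilin ℝ ℝ fun k : Fin m × Fin n ↦ C k.1 k.2 - ε).convexOn
      (convex_transportationPolytope p q))
    hfeas (isMinOn_iff.2 fun z hz ↦ hopt (Function.curry z) hz) (hp i) (hq j)
end

section
/- Let C ∈ ℝ^{m×n}, ε > 0, ξ_{ij} = exp(−C_{ij}/ε), and let p ∈ ℝ^m, q ∈ ℝ^n have nonnegative entries. Suppose π ∈ U(p,q) and there exist a ∈ ℝ^m, b ∈ ℝ^n with strictly positive entries such that π_{ij} = ξ_{ij} a_i b_j for all (i,j). Then π minimizes the regularized OT objective F_ε over U(p,q): F_ε(π) ≤ F_ε(π') for every π' ∈ U(p,q), with equality only if π' = π. -/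
open Finset

/-! Relative entropy to `π` measures suboptimality: on the support of `π = diag(a) ξ diag(b)` the
derivative `C i j + ε log (π i j)` of `F_ε` has the form `α i + β j`, hence is orthogonal to
differences of couplings. The Bregman identity for `F_ε` thus reduces to
`F_ε(π') - F_ε(π) = ε KL(π' ‖ π)`. An entry of `π` vanishes only together with its whole row or
column, so the marginals force the support of `π'` into that of `π` and the divergence is finite. -/

section RelEntropy

open InformationTheory

variable {ι : Type*} [Fintype ι] {x y : ι → ℝ}

theorem mul_klFun_div {s t : ℝ} (h : t = 0 → s = 0) :
    t * klFun (s / t) = s * (Real.log s - Real.log t) + t - s := by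
  obtain rfl | ht := eq_or_ne t 0
  · simp [h rfl]
  obtain rfl | hs := eq_or_ne s 0
  · simp [klFun_zero]
  rw [klFun_apply, Real.log_div hs ht]
  field_simp

theorem mul_klFun_div_nonneg {s t : ℝ} (hs : 0 ≤ s) (ht : 0 ≤ t) : 0 ≤ t * klFun (s / t) :=
  mul_nonneg ht (klFun_nonneg (div_nonneg hs ht))

theorem mul_klFun_div_eq_zero_iff {s t : ℝ} (hs : 0 ≤ s) (ht : 0 ≤ t) (h : t = 0 → s = 0) :
    t * klFun (s / t) = 0 ↔ s = t := by
  obtain rfl | ht' := eq_or_ne t 0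
  · simp [h rfl]
  · rw [mul_eq_zero_iff_left ht', klFun_eq_zero_iff (div_nonneg hs ht), div_eq_one_iff_eq ht']

/-- The relative entropy `KL(x ‖ y) = ∑ i, (x i log (x i / y i) + y i - x i)` of families of
nonnegative numbers of possibly different total mass, written through `klFun`. It takes this
value only when `x` vanishes wherever `y` does: since `x i / 0 = 0`, the terms with `y i = 0` are
counted as `0` rather than as `∞`. -/
noncomputable def relEntropy (x y : ι → ℝ) : ℝ :=
  ∑ i, y i * klFun (x i / y i)

theorem relEntropy_eq_sum (hxy : ∀ i, y i = 0 → x i = 0) :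
    relEntropy x y = ∑ i, (x i * (Real.log (x i) - Real.log (y i)) + y i - x i) :=
  sum_congr rfl fun i _ => mul_klFun_div (hxy i)

theorem relEntropy_nonneg (hx : ∀ i, 0 ≤ x i) (hy : ∀ i, 0 ≤ y i) : 0 ≤ relEntropy x y :=
  sum_nonneg fun i _ => mul_klFun_div_nonneg (hx i) (hy i)

theorem relEntropy_eq_zero_iff (hx : ∀ i, 0 ≤ x i) (hy : ∀ i, 0 ≤ y i)
    (hxy : ∀ i, y i = 0 → x i = 0) : relEntropy x y = 0 ↔ x = y := by
  rw [relEntropy, sum_eq_zero_iff_of_nonneg fun i _ => mul_klFun_div_nonneg (hx i) (hy i),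
    funext_iff]
  simp only [mem_univ, true_imp_iff, mul_klFun_div_eq_zero_iff (hx _) (hy _) (hxy _)]

end RelEntropy

theorem sum_mul_add_eq_zero {ι κ R : Type*} [Fintype ι] [Fintype κ]
    [NonUnitalNonAssocSemiring R] {d : ι → κ → R} (hrow : ∀ i, ∑ j, d i j = 0)
    (hcol : ∀ j, ∑ i, d i j = 0) (α : ι → R) (β : κ → R) :
    ∑ i, ∑ j, d i j * (α i + β j) = 0 := by
  have hα : ∑ i, ∑ j, d i j * α i = 0 := by simp only [← sum_mul, hrow, zero_mul, sum_const_zero]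
  have hβ : ∑ i, ∑ j, d i j * β j = 0 := by
    rw [sum_comm]
    simp only [← sum_mul, hcol, zero_mul, sum_const_zero]
  simp only [mul_add, sum_add_distrib, hα, hβ, add_zero]

theorem add_mul_log_gibbs_mul_mul {c ε a b : ℝ} (hε : ε ≠ 0) (ha : a ≠ 0) (hb : b ≠ 0) :
    c + ε * Real.log (Real.exp (-c / ε) * a * b) = ε * Real.log a + ε * Real.log b := by
  have hexp := Real.exp_ne_zero (-c / ε)
  rw [Real.log_mul (mul_ne_zero hexp ha) hb, Real.log_mul hexp ha, Real.log_exp]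
  field_simp
  ring

section EntropicTransport

variable {m n : ℕ} {C : Matrix (Fin m) (Fin n) ℝ} {ε : ℝ} {p : Fin m → ℝ} {q : Fin n → ℝ}
  {π π' : Matrix (Fin m) (Fin n) ℝ}

theorem regObj_eq_add_relEntropy_add_sum (hsupp : ∀ i j, π i j = 0 → π' i j = 0) :
    regObj C ε π' = regObj C ε π + ε * relEntropy π'.vec π.vec +
      ∑ i, ∑ j, (π' i j - π i j) * (C i j + ε * Real.log (π i j)) := by
  have hvec : ∀ ij, π.vec ij = 0 → π'.vec ij = 0 := fun ij => hsupp ij.2 ij.1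
  rw [relEntropy_eq_sum hvec, Fintype.sum_prod_type_right]
  simp only [regObj, Matrix.vec, mul_sum, ← sum_add_distrib]
  refine sum_congr rfl fun i _ => sum_congr rfl fun j _ => ?_
  ring

namespace InPolytope

theorem sum_sub_mul_add_eq_zero (hπ : InPolytope p q π) (hπ' : InPolytope p q π')
    (α : Fin m → ℝ) (β : Fin n → ℝ) : ∑ i, ∑ j, (π' i j - π i j) * (α i + β j) = 0 :=
  sum_mul_add_eq_zero (fun i => by rw [sum_sub_distrib, hπ'.2.1, hπ.2.1, sub_self])
    (fun j => by rw [sum_sub_distrib, hπ'.2.2, hπ.2.2, sub_self]) α β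

theorem apply_eq_zero_of_row_eq_zero (hπ : InPolytope p q π) (hπ' : InPolytope p q π') {i : Fin m}
    (h : ∀ j, π i j = 0) (j : Fin n) : π' i j = 0 := by
  have hsum : ∑ j, π' i j = 0 := by rw [hπ'.2.1, ← hπ.2.1, sum_eq_zero fun j _ => h j]
  exact (sum_eq_zero_iff_of_nonneg fun j _ => hπ'.1 i j).1 hsum j (mem_univ j)

theorem apply_eq_zero_of_col_eq_zero (hπ : InPolytope p q π) (hπ' : InPolytope p q π') {j : Fin n}
    (h : ∀ i, π i j = 0) (i : Fin m) : π' i j = 0 := by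
  have hsum : ∑ i, π' i j = 0 := by rw [hπ'.2.2, ← hπ.2.2, sum_eq_zero fun i _ => h i]
  exact (sum_eq_zero_iff_of_nonneg fun i _ => hπ'.1 i j).1 hsum i (mem_univ i)

theorem apply_eq_zero_of_scaling {ξ : Matrix (Fin m) (Fin n) ℝ} {a : Fin m → ℝ} {b : Fin n → ℝ}
    (hξ : ∀ i j, ξ i j ≠ 0) (hscale : ∀ i j, π i j = ξ i j * a i * b j) (hπ : InPolytope p q π)
    (hπ' : InPolytope p q π') {i : Fin m} {j : Fin n} (h : π i j = 0) : π' i j = 0 := by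
  have hab : a i = 0 ∨ b j = 0 := by simpa [hscale, hξ] using h
  rcases hab with ha | hb
  · exact hπ.apply_eq_zero_of_row_eq_zero hπ' (fun j => by simp [hscale, ha]) j
  · exact hπ.apply_eq_zero_of_col_eq_zero hπ' (fun i => by simp [hscale, hb]) i

theorem regObj_eq_add_relEntropy {α : Fin m → ℝ} {β : Fin n → ℝ}
    (hpot : ∀ i j, π i j ≠ 0 → C i j + ε * Real.log (π i j) = α i + β j)
    (hπ : InPolytope p q π) (hπ' : InPolytope p q π') (hsupp : ∀ i j, π i j = 0 → π' i j = 0) :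
    regObj C ε π' = regObj C ε π + ε * relEntropy π'.vec π.vec := by
  have hgrad : ∑ i, ∑ j, (π' i j - π i j) * (C i j + ε * Real.log (π i j)) = 0 := by
    rw [← hπ.sum_sub_mul_add_eq_zero hπ' α β]
    refine sum_congr rfl fun i _ => sum_congr rfl fun j _ => ?_
    obtain h | h := eq_or_ne (π i j) 0
    · simp [h, hsupp i j h]
    · rw [hpot i j h]
  rw [regObj_eq_add_relEntropy_add_sum hsupp, hgrad, add_zero]

end InPolytope

end EntropicTransport

theorem stmt_13_general {m n : ℕ} {C : Matrix (Fin m) (Fin n) ℝ} {ε : ℝ} (hε : 0 < ε)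
    {ξ : Matrix (Fin m) (Fin n) ℝ} (hξ : ∀ i j, ξ i j = Real.exp (-(C i j) / ε))
    {p : Fin m → ℝ} {q : Fin n → ℝ} {π : Matrix (Fin m) (Fin n) ℝ} (hπ : InPolytope p q π)
    {a : Fin m → ℝ} {b : Fin n → ℝ} (hscale : ∀ i j, π i j = ξ i j * a i * b j)
    {π' : Matrix (Fin m) (Fin n) ℝ} (hπ' : InPolytope p q π') :
    regObj C ε π ≤ regObj C ε π' ∧ (regObj C ε π = regObj C ε π' → π' = π) := by
  have hξ0 : ∀ i j, ξ i j ≠ 0 := fun i j => hξ i j ▸ Real.exp_ne_zero _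
  have hsupp : ∀ i j, π i j = 0 → π' i j = 0 := fun _ _ =>
    hπ.apply_eq_zero_of_scaling hξ0 hscale hπ'
  have hpot : ∀ i j, π i j ≠ 0 →
      C i j + ε * Real.log (π i j) = ε * Real.log (a i) + ε * Real.log (b j) := by
    intro i j h
    rw [hscale i j] at h ⊢
    rw [hξ, add_mul_log_gibbs_mul_mul hε.ne' (right_ne_zero_of_mul (left_ne_zero_of_mul h))
      (right_ne_zero_of_mul h)]
  have hnonneg : ∀ ij, 0 ≤ π.vec ij := fun ij => hπ.1 ij.2 ij.1
  have hnonneg' : ∀ ij, 0 ≤ π'.vec ij := fun ij => hπ'.1 ij.2 ij.1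
  rw [hπ.regObj_eq_add_relEntropy hpot hπ' hsupp]
  refine ⟨le_add_of_nonneg_right (mul_nonneg hε.le
    (relEntropy_nonneg hnonneg' hnonneg)), fun heq => ?_⟩
  have hKL : relEntropy π'.vec π.vec = 0 :=
    (mul_eq_zero_iff_left hε.ne').1 (left_eq_add.1 heq)
  exact Matrix.vec_inj.1 <|
    (relEntropy_eq_zero_iff hnonneg' hnonneg fun ij => hsupp ij.2 ij.1).1 hKL

/-- a coupling in `U(p, q)` of the scaled form
`π_{ij} = ξ_{ij} a_i b_j` (with `a, b` positive and `ξ` the Gibbs kernel)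
minimizes `F_ε` over `U(p, q)`, and is the unique minimizer. -/
theorem stmt_13 (m n : ℕ) (C : Matrix (Fin m) (Fin n) ℝ) (ε : ℝ) (hε : 0 < ε)
    (ξ : Matrix (Fin m) (Fin n) ℝ) (hξ : ∀ i j, ξ i j = Real.exp (-(C i j) / ε))
    (p : Fin m → ℝ) (q : Fin n → ℝ) (hp : ∀ i, 0 ≤ p i) (hq : ∀ j, 0 ≤ q j)
    (π : Matrix (Fin m) (Fin n) ℝ) (hπ : InPolytope p q π)
    (a : Fin m → ℝ) (b : Fin n → ℝ) (ha : ∀ i, 0 < a i) (hb : ∀ j, 0 < b j)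
    (hscale : ∀ i j, π i j = ξ i j * a i * b j) :
    ∀ π', InPolytope p q π' →
      regObj C ε π ≤ regObj C ε π' ∧ (regObj C ε π = regObj C ε π' → π' = π) :=
  fun _ hπ' => stmt_13_general hε hξ hπ hscale hπ'
end

section
/- Let C ∈ ℝ^{m×n}, ε > 0, ξ_{ij} = exp(−C_{ij}/ε), and let p ∈ ℝ^m, q ∈ ℝ^n have strictly positive entries with Σ_i p_i = Σ_j q_j. Then the (unique) minimizer π* of the regularized OT objective F_ε over the transportation polytope U(p,q) admits a scaling form: there exist vectors a ∈ ℝ^m and b ∈ ℝ^n with strictly positive entries such that π*_{ij} = ξ_{ij} a_i b_j for all (i,j). -/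
open Finset

/-!
In terms of the density `w = x / ξ` of a plan with respect to the Gibbs kernel, the objective is
`ε ∑ x (log w - 1)`, with gradient `ε log w`. Moving a small mass `t` around a rectangle, from
`(i, l)` and `(k, j)` to `(i, j)` and `(k, l)`, cannot decrease the objective at a minimizer, so
convexity yields `w_il w_kj ≤ w_ij w_kl` at the displaced plan, and `t → 0` at the minimizer itself.
Evaluating the gradient at the displaced plan, where the four corners are positive, avoids having to
prove first that the minimizer is positive. Exchanging `j` and `l` yields equality: the density has
vanishing `2 × 2` minors, and since the positive marginals exclude zero rows and columns, it is a
product of two positive vectors.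
-/

open Filter Matrix Topology

section Multiplicative

variable {ι κ K : Type*}

lemma pos_of_cross_mul_eq [Semiring K] [LinearOrder K] [IsStrictOrderedRing K] {w : Matrix ι κ K}
    (hw : ∀ i j, 0 ≤ w i j) (hrow : ∀ i, ∃ j, 0 < w i j) (hcol : ∀ j, ∃ i, 0 < w i j)
    (hcross : ∀ i k j l, w i j * w k l = w i l * w k j) (i : ι) (j : κ) : 0 < w i j := by
  obtain ⟨l, hil⟩ := hrow i
  obtain ⟨k, hkj⟩ := hcol j
  have hprod : 0 < w i j * w k l := hcross i k j l ▸ mul_pos hil hkj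
  exact pos_of_mul_pos_left hprod (hw k l)

lemma exists_pos_mul_of_cross_mul_eq [Semifield K] [LinearOrder K] [IsStrictOrderedRing K]
    {w : Matrix ι κ K} (hw : ∀ i j, 0 ≤ w i j) (hrow : ∀ i, ∃ j, 0 < w i j)
    (hcol : ∀ j, ∃ i, 0 < w i j) (hcross : ∀ i k j l, w i j * w k l = w i l * w k j) :
    ∃ (a : ι → K) (b : κ → K), (∀ i, 0 < a i) ∧ (∀ j, 0 < b j) ∧ ∀ i j, w i j = a i * b j := by
  have hpos := pos_of_cross_mul_eq hw hrow hcol hcross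
  rcases isEmpty_or_nonempty ι with _ | ⟨⟨i₀⟩⟩
  · exact ⟨1, 1, isEmptyElim, fun _ => one_pos, isEmptyElim⟩
  · obtain ⟨j₀, -⟩ := hrow i₀
    refine ⟨fun i => w i j₀, fun j => w i₀ j / w i₀ j₀, fun i => hpos i j₀,
      fun j => div_pos (hpos i₀ j) (hpos i₀ j₀), fun i j => ?_⟩
    rw [← mul_div_assoc, eq_div_iff (hpos i₀ j₀).ne', hcross]

end Multiplicative

lemma InPolytope.exists_pos_row {m n : ℕ} {p : Fin m → ℝ} {q : Fin n → ℝ}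
    {x : Matrix (Fin m) (Fin n) ℝ} (hx : InPolytope p q x) {i : Fin m} (hi : 0 < p i) :
    ∃ j, 0 < x i j := by
  by_contra! h
  exact hi.not_ge (hx.2.1 i ▸ sum_nonpos fun j _ => h j)

lemma InPolytope.exists_pos_col {m n : ℕ} {p : Fin m → ℝ} {q : Fin n → ℝ}
    {x : Matrix (Fin m) (Fin n) ℝ} (hx : InPolytope p q x) {j : Fin n} (hj : 0 < q j) :
    ∃ i, 0 < x i j := by
  by_contra! h
  exact hj.not_ge (hx.2.2 j ▸ sum_nonpos fun i _ => h i)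

section FeasibleDirection

/-- `D` is a feasible direction at the nonnegative matrix `x`: moving from `x` along `D` preserves
the marginals, and `D` removes mass only from positive entries. -/
structure IsFeasibleDirection {ι κ : Type*} [Fintype ι] [Fintype κ] (x D : Matrix ι κ ℝ) :
    Prop where
  row_sum : ∀ i, ∑ j, D i j = 0
  col_sum : ∀ j, ∑ i, D i j = 0
  pos_of_neg : ∀ i j, D i j < 0 → 0 < x i j

lemma eventually_add_mul_pos {s d : ℝ} (hs : 0 ≤ s) (hd : d ≠ 0) (hsd : d < 0 → 0 < s) :
    ∀ᶠ t in 𝓝[>] (0 : ℝ), 0 < s + t * d := by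
  rcases hd.lt_or_gt with hneg | hpos
  · have hlim : Tendsto (fun t : ℝ => s + t * d) (𝓝[>] 0) (𝓝 s) :=
      ((by fun_prop : Continuous fun t : ℝ => s + t * d).tendsto' 0 s (by simp)).mono_left
        nhdsWithin_le_nhds
    exact hlim.eventually_const_lt (hsd hneg)
  · filter_upwards [self_mem_nhdsWithin] with t ht
    exact add_pos_of_nonneg_of_pos hs (mul_pos ht hpos)

lemma IsFeasibleDirection.eventually_pos {ι κ : Type*} [Fintype ι] [Fintype κ]
    {x D : Matrix ι κ ℝ} (hD : IsFeasibleDirection x D) (hx : ∀ i j, 0 ≤ x i j) :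
    ∀ᶠ t in 𝓝[>] (0 : ℝ), ∀ i j, D i j ≠ 0 → 0 < (x + t • D) i j := by
  simp only [eventually_all]
  exact fun i j hij => eventually_add_mul_pos (hx i j) hij (hD.pos_of_neg i j)

lemma IsFeasibleDirection.eventually_inPolytope {m n : ℕ} {p : Fin m → ℝ} {q : Fin n → ℝ}
    {x D : Matrix (Fin m) (Fin n) ℝ} (hD : IsFeasibleDirection x D) (hx : InPolytope p q x) :
    ∀ᶠ t in 𝓝[>] (0 : ℝ), InPolytope p q (x + t • D) := by
  filter_upwards [hD.eventually_pos hx.1] with t hpos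
  refine ⟨fun i j => ?_, fun i => ?_, fun j => ?_⟩
  · by_cases hij : D i j = 0
    · simpa [hij] using hx.1 i j
    · exact (hpos i j hij).le
  · simp [sum_add_distrib, ← mul_sum, hx.2.1 i, hD.row_sum i]
  · simp [sum_add_distrib, ← mul_sum, hx.2.2 j, hD.col_sum j]

end FeasibleDirection

section Rectangle

variable {ι κ : Type*} [DecidableEq ι] [DecidableEq κ]

/-- The exchange direction on the rectangle with rows `i, k` and columns `j, l`: it adds a unit of
mass at `(i, j)` and `(k, l)` and removes one at `(i, l)` and `(k, j)`. -/
def rectangle (i k : ι) (j l : κ) : Matrix ι κ ℝ :=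
  vecMulVec (Pi.single i 1 - Pi.single k 1) (Pi.single j 1 - Pi.single l 1)

lemma eq_or_eq_of_rectangle_neg {i k a : ι} {j l b : κ} (h : rectangle i k j l a b < 0) :
    a = i ∧ b = l ∨ a = k ∧ b = j := by
  simp only [rectangle, vecMulVec_apply, Pi.sub_apply, Pi.single_apply] at h
  split_ifs at h <;> simp_all [zero_lt_one.not_gt]

lemma rectangle_corner_ne_zero {i k a : ι} {j l b : κ} (hik : i ≠ k) (hjl : j ≠ l)
    (ha : a = i ∨ a = k) (hb : b = j ∨ b = l) : rectangle i k j l a b ≠ 0 := by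
  rcases ha with rfl | rfl <;> rcases hb with rfl | rfl <;>
    simp [rectangle, vecMulVec_apply, hik, hjl, hik.symm, hjl.symm]

variable [Fintype ι] [Fintype κ]

lemma sum_rectangle_mul (i k : ι) (j l : κ) (G : Matrix ι κ ℝ) :
    ∑ a, ∑ b, rectangle i k j l a b * G a b = G i j + G k l - (G i l + G k j) := by
  calc ∑ a, ∑ b, rectangle i k j l a b * G a b
      = (Pi.single i 1 - Pi.single k 1) ⬝ᵥ G *ᵥ (Pi.single j 1 - Pi.single l 1) := by
        simp only [rectangle, vecMulVec_apply, dotProduct, mulVec, mul_sum]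
        exact sum_congr rfl fun a _ => sum_congr rfl fun b _ => by ring
    _ = G i j + G k l - (G i l + G k j) := by
        simp only [sub_dotProduct, mulVec_sub, dotProduct_sub, mulVec_single_one,
          single_one_dotProduct, col_apply]
        ring

lemma isFeasibleDirection_rectangle {x : Matrix ι κ ℝ} {i k : ι} {j l : κ} (hil : 0 < x i l)
    (hkj : 0 < x k j) : IsFeasibleDirection x (rectangle i k j l) where
  row_sum a := by simp [rectangle, vecMulVec_apply, ← mul_sum]
  col_sum b := by simp [rectangle, vecMulVec_apply, ← sum_mul]
  pos_of_neg a b h := by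
    rcases eq_or_eq_of_rectangle_neg h with ⟨rfl, rfl⟩ | ⟨rfl, rfl⟩ <;> assumption

end Rectangle

section GibbsDensity

/-- The entrywise density `x i j / ξ i j` of the plan `x` with respect to the Gibbs kernel
`ξ i j = exp (-C i j / ε)`; a scaling form of `x` is a factorization of this matrix. -/
noncomputable def gibbsDensity {ι κ : Type*} (C : Matrix ι κ ℝ) (ε : ℝ) (x : Matrix ι κ ℝ) :
    Matrix ι κ ℝ :=
  of fun i j => Real.exp (C i j / ε) * x i j

section Entrywise

variable {ι κ : Type*} {C : Matrix ι κ ℝ} {ε : ℝ} {x : Matrix ι κ ℝ}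

lemma exp_neg_mul_gibbsDensity (i : ι) (j : κ) :
    Real.exp (-C i j / ε) * gibbsDensity C ε x i j = x i j := by
  rw [gibbsDensity, of_apply, ← mul_assoc, ← Real.exp_add, neg_div, neg_add_cancel, Real.exp_zero,
    one_mul]

lemma gibbsDensity_pos {i : ι} {j : κ} (h : 0 < x i j) : 0 < gibbsDensity C ε x i j :=
  mul_pos (Real.exp_pos _) h

lemma gibbsDensity_nonneg {i : ι} {j : κ} (h : 0 ≤ x i j) : 0 ≤ gibbsDensity C ε x i j :=
  mul_nonneg (Real.exp_pos _).le h

lemma tendsto_gibbsDensity_add_smul (D : Matrix ι κ ℝ) (i : ι) (j : κ) :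
    Tendsto (fun t : ℝ => gibbsDensity C ε (x + t • D) i j) (𝓝[>] 0)
      (𝓝 (gibbsDensity C ε x i j)) := by
  have hcont : Continuous fun t : ℝ => Real.exp (C i j / ε) * (x i j + t * D i j) := by fun_prop
  exact (hcont.tendsto' 0 _ (by simp [gibbsDensity])).mono_left nhdsWithin_le_nhds

end Entrywise

lemma mul_log_mul_sub_one_sub_le {c r s : ℝ} (hc : c ≠ 0) (hr : 0 < r) (hs : 0 ≤ s) :
    r * (Real.log (c * r) - 1) - s * (Real.log (c * s) - 1) ≤ (r - s) * Real.log (c * r) := by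
  rcases hs.eq_or_lt with rfl | hs
  · linarith
  · have hgibbs : s * (Real.log r - Real.log s) ≤ r - s := by
      calc s * (Real.log r - Real.log s) = s * Real.log (r / s) := by
            rw [Real.log_div hr.ne' hs.ne']
        _ ≤ s * (r / s - 1) := by
            gcongr
            exact Real.log_le_sub_one_of_pos (div_pos hr hs)
        _ = r - s := by field_simp
    rw [Real.log_mul hc hr.ne', Real.log_mul hc hs.ne']
    linarith

variable {m n : ℕ} {C : Matrix (Fin m) (Fin n) ℝ} {ε : ℝ} {p : Fin m → ℝ} {q : Fin n → ℝ}
  {x y D : Matrix (Fin m) (Fin n) ℝ}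

lemma regObj_eq_mul_sum_log_gibbsDensity (hε : ε ≠ 0) :
    regObj C ε x = ε * ∑ i, ∑ j, x i j * (Real.log (gibbsDensity C ε x i j) - 1) := by
  simp only [regObj, mul_sum, ← sum_add_distrib]
  refine sum_congr rfl fun i _ => sum_congr rfl fun j _ => ?_
  rcases eq_or_ne (x i j) 0 with hij | hij
  · simp [hij]
  · rw [gibbsDensity, of_apply, Real.log_mul (Real.exp_pos _).ne' hij, Real.log_exp]
    field_simp
    ring

lemma regObj_sub_le (hε : 0 < ε) (hx : ∀ i j, 0 ≤ x i j) (hy : ∀ i j, y i j ≠ x i j → 0 < y i j) :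
    regObj C ε y - regObj C ε x ≤
      ε * ∑ i, ∑ j, (y i j - x i j) * Real.log (gibbsDensity C ε y i j) := by
  rw [regObj_eq_mul_sum_log_gibbsDensity hε.ne', regObj_eq_mul_sum_log_gibbsDensity hε.ne',
    ← mul_sub]
  simp only [← sum_sub_distrib]
  gcongr with i _ j _
  rcases eq_or_ne (y i j) (x i j) with hij | hij
  · simp [gibbsDensity, hij]
  · exact mul_log_mul_sub_one_sub_le (Real.exp_pos _).ne' (hy i j hij) (hx i j)

lemma eventually_sum_mul_log_gibbsDensity_nonneg (hε : 0 < ε) (hx : InPolytope p q x)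
    (hmin : IsMinOn (regObj C ε) {y | InPolytope p q y} x) (hD : IsFeasibleDirection x D) :
    ∀ᶠ t in 𝓝[>] (0 : ℝ),
      0 ≤ ∑ i, ∑ j, D i j * Real.log (gibbsDensity C ε (x + t • D) i j) := by
  filter_upwards [self_mem_nhdsWithin, hD.eventually_pos hx.1, hD.eventually_inPolytope hx]
    with t ht hpos hfeas
  have hle : regObj C ε (x + t • D) - regObj C ε x ≤
      ε * (t * ∑ i, ∑ j, D i j * Real.log (gibbsDensity C ε (x + t • D) i j)) := by
    simpa only [Matrix.add_apply, Matrix.smul_apply, smul_eq_mul, add_sub_cancel_left, mul_assoc,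
      ← mul_sum]
      using regObj_sub_le (C := C) hε hx.1 fun i j hij => hpos i j fun h0 => hij (by simp [h0])
  have hnonneg := (sub_nonneg.2 (isMinOn_iff.1 hmin _ hfeas)).trans hle
  exact nonneg_of_mul_nonneg_right (nonneg_of_mul_nonneg_right hnonneg hε) ht

lemma eventually_gibbsDensity_mul_le_mul (hε : 0 < ε) (hx : InPolytope p q x)
    (hmin : IsMinOn (regObj C ε) {y | InPolytope p q y} x) {i k : Fin m} {j l : Fin n}
    (hik : i ≠ k) (hjl : j ≠ l) (hil : 0 < x i l) (hkj : 0 < x k j) :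
    ∀ᶠ t in 𝓝[>] (0 : ℝ),
      gibbsDensity C ε (x + t • rectangle i k j l) i l *
          gibbsDensity C ε (x + t • rectangle i k j l) k j ≤
        gibbsDensity C ε (x + t • rectangle i k j l) i j *
          gibbsDensity C ε (x + t • rectangle i k j l) k l := by
  have hD := isFeasibleDirection_rectangle hil hkj
  filter_upwards [hD.eventually_pos hx.1,
    eventually_sum_mul_log_gibbsDensity_nonneg hε hx hmin hD] with t hpos hsum
  set w := gibbsDensity C ε (x + t • rectangle i k j l)
  have hw {a b} (ha : a = i ∨ a = k) (hb : b = j ∨ b = l) : 0 < w a b :=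
    gibbsDensity_pos (hpos a b (rectangle_corner_ne_zero hik hjl ha hb))
  have hij : 0 < w i j := hw (.inl rfl) (.inl rfl)
  have hkl : 0 < w k l := hw (.inr rfl) (.inr rfl)
  have hil : 0 < w i l := hw (.inl rfl) (.inr rfl)
  have hkj : 0 < w k j := hw (.inr rfl) (.inl rfl)
  have hlog : Real.log (w i l) + Real.log (w k j) ≤ Real.log (w i j) + Real.log (w k l) :=
    sub_nonneg.1 (hsum.trans_eq (sum_rectangle_mul i k j l (w.map Real.log)))
  rwa [← Real.log_mul hil.ne' hkj.ne', ← Real.log_mul hij.ne' hkl.ne',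
    Real.log_le_log_iff (mul_pos hil hkj) (mul_pos hij hkl)] at hlog

lemma gibbsDensity_mul_le_mul (hε : 0 < ε) (hx : InPolytope p q x)
    (hmin : IsMinOn (regObj C ε) {y | InPolytope p q y} x) (i k : Fin m) (j l : Fin n) :
    gibbsDensity C ε x i l * gibbsDensity C ε x k j ≤
      gibbsDensity C ε x i j * gibbsDensity C ε x k l := by
  rcases eq_or_ne i k with rfl | hik
  · exact (mul_comm _ _).le
  rcases eq_or_ne j l with rfl | hjl
  · exact le_rfl
  have hrhs : 0 ≤ gibbsDensity C ε x i j * gibbsDensity C ε x k l :=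
    mul_nonneg (gibbsDensity_nonneg (hx.1 i j)) (gibbsDensity_nonneg (hx.1 k l))
  rcases (hx.1 i l).eq_or_lt with hil | hil
  · simpa [gibbsDensity, ← hil] using hrhs
  rcases (hx.1 k j).eq_or_lt with hkj | hkj
  · simpa [gibbsDensity, ← hkj] using hrhs
  exact le_of_tendsto_of_tendsto
    ((tendsto_gibbsDensity_add_smul _ i l).mul (tendsto_gibbsDensity_add_smul _ k j))
    ((tendsto_gibbsDensity_add_smul _ i j).mul (tendsto_gibbsDensity_add_smul _ k l))
    (eventually_gibbsDensity_mul_le_mul hε hx hmin hik hjl hil hkj)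

end GibbsDensity

/-- for balanced strictly positive marginals, any minimizer of
`F_ε` over `U(p, q)` admits a Sinkhorn scaling form `π*_{ij} = ξ_{ij} a_i b_j`
with positive vectors `a` and `b`, where `ξ` is the Gibbs kernel. -/
theorem stmt_14 (m n : ℕ) (C : Matrix (Fin m) (Fin n) ℝ) (ε : ℝ) (hε : 0 < ε)
    (ξ : Matrix (Fin m) (Fin n) ℝ) (hξ : ∀ i j, ξ i j = Real.exp (-(C i j) / ε))
    (p : Fin m → ℝ) (q : Fin n → ℝ) (hp : ∀ i, 0 < p i) (hq : ∀ j, 0 < q j)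
    (hbal : ∑ i, p i = ∑ j, q j)
    (xstar : Matrix (Fin m) (Fin n) ℝ)
    (hfeas : InPolytope p q xstar)
    (hopt : ∀ x, InPolytope p q x → regObj C ε xstar ≤ regObj C ε x) :
    ∃ (a : Fin m → ℝ) (b : Fin n → ℝ),
      (∀ i, 0 < a i) ∧ (∀ j, 0 < b j) ∧
        ∀ i j, xstar i j = ξ i j * a i * b j := by
  have hmin : IsMinOn (regObj C ε) {x | InPolytope p q x} xstar := isMinOn_iff.2 hopt
  obtain ⟨a, b, ha, hb, hab⟩ := exists_pos_mul_of_cross_mul_eq (w := gibbsDensity C ε xstar)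
    (fun i j => gibbsDensity_nonneg (hfeas.1 i j))
    (fun i => (hfeas.exists_pos_row (hp i)).imp fun _ => gibbsDensity_pos)
    (fun j => (hfeas.exists_pos_col (hq j)).imp fun _ => gibbsDensity_pos)
    (fun i k j l => le_antisymm (gibbsDensity_mul_le_mul hε hfeas hmin i k l j)
      (gibbsDensity_mul_le_mul hε hfeas hmin i k j l))
  refine ⟨a, b, ha, hb, fun i j => ?_⟩
  rw [mul_assoc, ← hab, hξ, exp_neg_mul_gibbsDensity]
end

section
/- Let C ∈ ℝ^{m×n} and let p ∈ ℝ^m, q ∈ ℝ^n have nonnegative entries with Σ_i p_i = Σ_j q_j and U(p,q) nonempty. Then the optimal value of the regularized OT problem converges to the optimal value of the OT problem as the regularization vanishes: min_{π ∈ U(p,q)} F_ε(π) → min_{x ∈ U(p,q)} Σ_{ij} C_{ij} x_{ij} as ε → 0⁺. -/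
open Finset Filter Topology

/-!
The entropy term `t * (log t - 1)` extends continuously by `0` to `t = 0`, so the regularized
objective is jointly continuous in `ε` and the plan. The transportation polytope is compact, hence
the optimal value is continuous in `ε`, and at `ε = 0` it is the unregularized optimal value.
-/

section

variable {m n : ℕ}

theorem InPolytope.apply_le_row_marginal {p : Fin m → ℝ} {q : Fin n → ℝ}
    {x : Matrix (Fin m) (Fin n) ℝ} (hx : InPolytope p q x) (i : Fin m) (j : Fin n) :
    x i j ≤ p i := by
  rw [← hx.2.1 i]
  exact single_le_sum (f := x i) (fun k _ ↦ hx.1 i k) (mem_univ j)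

theorem isClosed_setOfPred_inPolytope (p : Fin m → ℝ) (q : Fin n → ℝ) :
    IsClosed {x | InPolytope p q x} := by
  simp only [InPolytope, Set.ofPred_and, Set.ofPred_forall]
  refine .inter ?_ (.inter ?_ ?_)
  · exact isClosed_iInter fun i ↦ isClosed_iInter fun j ↦
      isClosed_le continuous_const (by fun_prop)
  · exact isClosed_iInter fun i ↦ isClosed_eq (by fun_prop) continuous_const
  · exact isClosed_iInter fun j ↦ isClosed_eq (by fun_prop) continuous_const

theorem isCompact_setOfPred_inPolytope (p : Fin m → ℝ) (q : Fin n → ℝ) :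
    IsCompact {x | InPolytope p q x} := by
  have isCompact_box :
      IsCompact (Set.univ.pi fun i : Fin m ↦ Set.univ.pi fun _ : Fin n ↦ Set.Icc 0 (p i)) :=
    isCompact_univ_pi fun _ ↦ isCompact_univ_pi fun _ ↦ isCompact_Icc
  refine isCompact_box.of_isClosed_subset (isClosed_setOfPred_inPolytope p q) ?_
  exact fun x hx i _ j _ ↦ ⟨hx.1 i j, hx.apply_le_row_marginal i j⟩

theorem continuous_mul_log_sub_one : Continuous fun t : ℝ ↦ t * (Real.log t - 1) := by
  simpa only [mul_sub, mul_one] using Real.continuous_mul_log.fun_sub continuous_id'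

theorem continuous_regObj (C : Matrix (Fin m) (Fin n) ℝ) :
    Continuous fun z : ℝ × Matrix (Fin m) (Fin n) ℝ ↦ regObj C z.1 z.2 := by
  have continuous_entropy (i : Fin m) (j : Fin n) : Continuous
      fun z : ℝ × Matrix (Fin m) (Fin n) ℝ ↦ z.2 i j * (Real.log (z.2 i j) - 1) :=
    continuous_mul_log_sub_one.comp (by fun_prop)
  unfold regObj
  fun_prop

theorem continuous_sInf_regObj (C : Matrix (Fin m) (Fin n) ℝ) (p : Fin m → ℝ) (q : Fin n → ℝ) :
    Continuous fun ε ↦ sInf (regObj C ε '' {x | InPolytope p q x}) :=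
  (isCompact_setOfPred_inPolytope p q).continuous_sInf (continuous_regObj C)

theorem regObj_zero (C : Matrix (Fin m) (Fin n) ℝ) :
    regObj C 0 = fun x ↦ ∑ i, ∑ j, C i j * x i j := by
  ext x
  simp only [regObj, zero_mul, add_zero]

end

/-- for balanced nonnegative marginals with nonempty `U(p, q)`,
the optimal value of the regularized OT problem converges, as `ε → 0⁺`, to the
optimal value of the (unregularized) OT problem. -/
theorem stmt_16 (m n : ℕ) (C : Matrix (Fin m) (Fin n) ℝ)
    (p : Fin m → ℝ) (q : Fin n → ℝ) (hp : ∀ i, 0 ≤ p i) (hq : ∀ j, 0 ≤ q j)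
    (hbal : ∑ i, p i = ∑ j, q j)
    (hne : ∃ x : Matrix (Fin m) (Fin n) ℝ, InPolytope p q x) :
    Tendsto (fun ε : ℝ => sInf ((regObj C ε) '' {x | InPolytope p q x}))
      (𝓝[>] 0)
      (𝓝 (sInf ((fun x : Matrix (Fin m) (Fin n) ℝ => ∑ i, ∑ j, C i j * x i j) ''
        {x | InPolytope p q x}))) := by
  rw [← regObj_zero]
  exact ((continuous_sInf_regObj C p q).tendsto 0).mono_left nhdsWithin_le_nhds
end
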